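/- Integrated Brakke-type identity at the ε-level: for every φ ∈ C¹(ℝ^d × [0,T]) whose spatial supports supp φ(·,t) are contained in one fixed compact subset of ℝ^d, and every 0 ≤ t₁ < t₂ ≤ T, one has σ ( ∫ φ(x,t₂) dμ_{t₂}^ε(x) − ∫ φ(x,t₁) dμ_{t₁}^ε(x) ) = ∫_{t₁}^{t₂} ∫_{ℝ^d} ( −ε φ ( (h^ε)²/2 + (∂ₜφ̃)²/2 ) + φ λ(t)² W(φ̃)/ε − ε (∇φ · ∇φ̃)( h^ε + λ(t) √(2W(φ̃))/ε ) ) dx dt + σ ∫_{t₁}^{t₂} ∫_{ℝ^d} ∂ₜφ dμ_t^ε dt, where φ̃ denotes the solution of the equation and φ the test function. -/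

import Mathlib

open MeasureTheory Real Function
open scoped RealInnerProductSpace

noncomputable section

abbrev Euc (d : ℕ) := EuclideanSpace ℝ (Fin d)

/-- The double-well potential `W(s) = (1-s²)²/2`. -/
def W (s : ℝ) : ℝ := (1 - s ^ 2) ^ 2 / 2

/-- Its derivative `W'(s) = -2s(1-s²)`. -/
def Wp (s : ℝ) : ℝ := -2 * s * (1 - s ^ 2)

/-- `k(s) = ∫₀ˢ √(2W(r)) dr`. -/
def kfun (s : ℝ) : ℝ := ∫ r in (0:ℝ)..s, Real.sqrt (2 * W r)

/-- The unit cell `Q = [0,1)^d`. -/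
def Qcell (d : ℕ) : Set (Euc d) := {x | ∀ i, x i ∈ Set.Ico (0:ℝ) 1}

/-- The Laplacian (sum of second partial derivatives). -/
def lap {d : ℕ} (f : Euc d → ℝ) (x : Euc d) : ℝ :=
  ∑ i : Fin d, fderiv ℝ (fun y => fderiv ℝ f y (EuclideanSpace.single i 1)) x
    (EuclideanSpace.single i 1)

/-- `σ = ∫₋₁¹ √(2W(s)) ds`. -/
def sigma0 : ℝ := ∫ s in (-1:ℝ)..1, Real.sqrt (2 * W s)

/-- Density of the diffuse surface measure `μ_t^ε` with respect to Lebesgue measure. -/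
def muDens (d : ℕ) (ε : ℝ) (φt : Euc d → ℝ → ℝ) (x : Euc d) (t : ℝ) : ℝ :=
  (1 / sigma0) * (ε * ‖gradient (fun y => φt y t) x‖ ^ 2 / 2 + W (φt x t) / ε)

/-- The approximate mean curvature `h^ε = Δφ̃ - W'(φ̃)/ε²`. -/
def heps (d : ℕ) (ε : ℝ) (φt : Euc d → ℝ → ℝ) (x : Euc d) (t : ℝ) : ℝ :=
  lap (fun y => φt y t) x - Wp (φt x t) / ε ^ 2

/-!
Differentiating `∫ ζ (ε |∇u|² / 2 + V(u) / ε)` in time, exchanging `∂ₜ` with `∇`, and integrating by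
parts against the weight `ζ` gives `-ε ∫ (ζ h + ∇ζ · ∇u) ∂ₜu` besides the term with `∂ₜζ`. The
equation says `∂ₜu = h + λ √(2V(u)) / ε`; in the term with `∇ζ` this is substituted directly, while
`-ε ζ h ∂ₜu` is polarized, its remainder `ε ζ (∂ₜu - h)² / 2` being exactly `ζ λ² V(u) / ε`.
-/

open scoped Gradient Laplacian InnerProductSpace

section SlabIntegrals

theorem support_deriv_right_subset {X F : Type*} [NormedAddCommGroup F] [NormedSpace ℝ F]
    {f f' : X → ℝ → F} {K : Set X} (hderiv : ∀ x t, HasDerivAt (f x) (f' x t) t)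
    (hfK : ∀ t, support (fun x => f x t) ⊆ K) (t : ℝ) : support (fun x => f' x t) ⊆ K := by
  intro x hx
  by_contra hxK
  have hfx : f x = fun _ => 0 := funext fun s => notMem_support.1 fun h => hxK (hfK s h)
  exact hx ((hderiv x t).unique (hfx ▸ hasDerivAt_const t 0))

variable {X F : Type*} [TopologicalSpace X] [MeasurableSpace X] [BorelSpace X] {μ : Measure X}
  [IsFiniteMeasureOnCompacts μ] [NormedAddCommGroup F] [NormedSpace ℝ F] {K : Set X}

theorem continuous_integral_of_support_subset {Y : Type*} [TopologicalSpace Y] {f : X → Y → F}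
    (hf : Continuous (uncurry f)) (hK : IsCompact K) (hfK : ∀ t, support (fun x => f x t) ⊆ K) :
    Continuous fun t => ∫ x, f x t ∂μ := by
  rw [← continuousOn_univ]
  refine continuousOn_integral_of_compact_support hK (hf.comp continuous_swap).continuousOn ?_
  exact fun t x _ hx => notMem_support.1 fun h => hx (hfK t h)

variable [SecondCountableTopology X] [T2Space X] [SFinite μ]

theorem intervalIntegral_integral_swap_of_support_subset {f : X → ℝ → F}
    (hf : Continuous (uncurry f)) (hK : IsCompact K) (hfK : ∀ t, support (fun x => f x t) ⊆ K)
    (a b : ℝ) : ∫ t in a..b, ∫ x, f x t ∂μ = ∫ x, (∫ t in a..b, f x t) ∂μ := by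
  have hf_zero : ∀ x ∉ K, ∀ t, f x t = 0 := fun x hx t => notMem_support.1 fun h => hx (hfK t h)
  have h_int : Integrable (uncurry fun t x => f x t)
      ((volume.restrict (Set.uIoc a b)).prod (μ.restrict K)) := by
    rw [Measure.prod_restrict]
    exact ((hf.comp continuous_swap).continuousOn.integrableOn_compact
      (isCompact_uIcc.prod hK)).mono_set (Set.prod_mono_left Set.uIoc_subset_uIcc)
  calc ∫ t in a..b, ∫ x, f x t ∂μ
    _ = ∫ t in a..b, ∫ x in K, f x t ∂μ := by
      simp_rw [setIntegral_eq_integral_of_forall_compl_eq_zero fun x hx => hf_zero x hx _]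
    _ = ∫ x in K, (∫ t in a..b, f x t) ∂μ := intervalIntegral_integral_swap h_int
    _ = ∫ x, (∫ t in a..b, f x t) ∂μ :=
      setIntegral_eq_integral_of_forall_compl_eq_zero fun x hx => by simp [hf_zero x hx]

theorem integral_sub_integral_eq_intervalIntegral_integral [CompleteSpace F] {f f' : X → ℝ → F}
    (hf : ∀ t, Continuous fun x => f x t) (hf' : Continuous (uncurry f'))
    (hderiv : ∀ x t, HasDerivAt (f x) (f' x t) t) (hK : IsCompact K)
    (hfK : ∀ t, support (fun x => f x t) ⊆ K) (a b : ℝ) :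
    (∫ x, f x b ∂μ) - ∫ x, f x a ∂μ = ∫ t in a..b, ∫ x, f' x t ∂μ := by
  have hf_int (t) : Integrable (fun x => f x t) μ :=
    (hf t).integrable_of_hasCompactSupport (.of_support_subset_isCompact hK (hfK t))
  have h_ftc (x) : ∫ t in a..b, f' x t = f x b - f x a :=
    intervalIntegral.integral_eq_sub_of_hasDerivAt (fun t _ => hderiv x t)
      ((hf'.comp (Continuous.prodMk_right x)).intervalIntegrable a b)
  rw [intervalIntegral_integral_swap_of_support_subset hf' hK
    (support_deriv_right_subset hderiv hfK) a b]
  simp_rw [h_ftc, integral_sub (hf_int b) (hf_int a)]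

theorem integral_mul_sub_integral_mul_eq_intervalIntegral_integral {f f' g g' : X → ℝ → ℝ}
    (hf : Continuous (uncurry f)) (hf' : Continuous (uncurry f'))
    (hg : Continuous (uncurry g)) (hg' : Continuous (uncurry g'))
    (hff' : ∀ x t, HasDerivAt (f x) (f' x t) t) (hgg' : ∀ x t, HasDerivAt (g x) (g' x t) t)
    (hK : IsCompact K) (hfK : ∀ t, support (fun x => f x t) ⊆ K) (a b : ℝ) :
    (∫ x, f x b * g x b ∂μ) - ∫ x, f x a * g x a ∂μ =
      (∫ t in a..b, ∫ x, f x t * g' x t ∂μ) + ∫ t in a..b, ∫ x, f' x t * g x t ∂μ := by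
  have hf'K := support_deriv_right_subset hff' hfK
  have hfg' : Continuous (uncurry fun x t => f x t * g' x t) := hf.mul hg'
  have hf'g : Continuous (uncurry fun x t => f' x t * g x t) := hf'.mul hg
  have hfg'K (t) : support (fun x => f x t * g' x t) ⊆ K :=
    (support_mul_subset_left _ _).trans (hfK t)
  have hf'gK (t) : support (fun x => f' x t * g x t) ⊆ K :=
    (support_mul_subset_left _ _).trans (hf'K t)
  have hfg_cont (t) : Continuous fun x => f x t * g x t :=
    (hf.mul hg).comp (Continuous.prodMk_left t)
  rw [integral_sub_integral_eq_intervalIntegral_integral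
      (f' := fun x t => f' x t * g x t + f x t * g' x t) hfg_cont (hf'g.add hfg')
      (fun x t => (hff' x t).mul (hgg' x t)) hK
      (fun t => (support_mul_subset_left _ _).trans (hfK t)) a b,
    add_comm, ← intervalIntegral.integral_add
      ((continuous_integral_of_support_subset hf'g hK hf'gK).intervalIntegrable a b)
      ((continuous_integral_of_support_subset hfg' hK hfg'K).intervalIntegrable a b)]
  refine intervalIntegral.integral_congr fun t _ => integral_add ?_ ?_
  · exact (hf'g.comp (Continuous.prodMk_left t)).integrable_of_hasCompactSupport
      (.of_support_subset_isCompact hK (hf'gK t))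
  · exact (hfg'.comp (Continuous.prodMk_left t)).integrable_of_hasCompactSupport
      (.of_support_subset_isCompact hK (hfg'K t))

end SlabIntegrals

section PartialDerivatives

variable {E F : Type*} [NormedAddCommGroup E] [NormedSpace ℝ E] [NormedAddCommGroup F]
  [NormedSpace ℝ F] {u : E → ℝ → F} {m n : WithTop ℕ∞}

theorem contDiff_uncurry_deriv_right (hu : ContDiff ℝ n (uncurry u)) (hmn : m + 1 ≤ n) :
    ContDiff ℝ m (uncurry fun x t => deriv (u x) t) :=
  ContDiff.fderiv_apply (f := fun (p : E × ℝ) s => u p.1 s) (g := Prod.snd) (k := fun _ => 1)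
    (hu.comp (by fun_prop : ContDiff ℝ n fun q : (E × ℝ) × ℝ => (q.1.1, q.2))) contDiff_snd
    contDiff_const hmn

theorem contDiff_uncurry_fderiv_left (hu : ContDiff ℝ n (uncurry u)) (hmn : m + 1 ≤ n) :
    ContDiff ℝ m (uncurry fun x t => fderiv ℝ (fun y => u y t) x) :=
  ContDiff.fderiv (f := fun (p : E × ℝ) y => u y p.2) (g := Prod.fst)
    (hu.comp (by fun_prop : ContDiff ℝ n fun q : (E × ℝ) × E => (q.2, q.1.2))) contDiff_fst hmn

theorem fderiv_left_eq (hu : Differentiable ℝ (uncurry u)) (x : E) (t : ℝ) :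
    fderiv ℝ (fun y => u y t) x =
      (fderiv ℝ (uncurry u) (x, t)).comp (ContinuousLinearMap.inl ℝ E ℝ) :=
  ((hu (x, t)).hasFDerivAt.comp (f := fun y => (y, t)) x (hasFDerivAt_prodMk_left x t)).fderiv

theorem deriv_right_eq (hu : Differentiable ℝ (uncurry u)) (x : E) (t : ℝ) :
    deriv (u x) t = fderiv ℝ (uncurry u) (x, t) (0, 1) :=
  ((hu (x, t)).hasFDerivAt.comp_hasDerivAt (f := fun s => (x, s)) t
    ((hasDerivAt_const t x).prodMk (hasDerivAt_id t))).deriv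

theorem hasDerivAt_fderiv_left (hu : ContDiff ℝ 2 (uncurry u)) (x : E) (t : ℝ) :
    HasDerivAt (fun s => fderiv ℝ (fun y => u y s) x)
      (fderiv ℝ (fun y => deriv (u y) t) x) t := by
  have hu' : Differentiable ℝ (uncurry u) := hu.differentiable two_ne_zero
  have hDu : Differentiable ℝ (fderiv ℝ (uncurry u)) :=
    (hu.fderiv_right (m := 1) le_rfl).differentiable one_ne_zero
  have h_symm : IsSymmSndFDerivAt ℝ (uncurry u) (x, t) :=
    hu.contDiffAt.isSymmSndFDerivAt (by simp)
  have hDu_time : HasDerivAt (fun s => fderiv ℝ (uncurry u) (x, s))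
      (fderiv ℝ (fderiv ℝ (uncurry u)) (x, t) (0, 1)) t :=
    (hDu (x, t)).hasFDerivAt.comp_hasDerivAt (f := fun s => (x, s)) t
      ((hasDerivAt_const t x).prodMk (hasDerivAt_id t))
  have hDu_space : HasFDerivAt (fun y => fderiv ℝ (uncurry u) (y, t))
      ((fderiv ℝ (fderiv ℝ (uncurry u)) (x, t)).comp (ContinuousLinearMap.inl ℝ E ℝ)) x :=
    (hDu (x, t)).hasFDerivAt.comp (f := fun y => (y, t)) x (hasFDerivAt_prodMk_left x t)
  simp_rw [fderiv_left_eq hu', deriv_right_eq hu']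
  rw [(hDu_space.clm_apply (hasFDerivAt_const (0, 1) x)).fderiv]
  refine (hDu_time.clm_comp (hasDerivAt_const t (ContinuousLinearMap.inl ℝ E ℝ))).congr_deriv ?_
  ext v
  simpa using h_symm (0, 1) (v, 0)

end PartialDerivatives

theorem integral_mul_fderiv_eq_neg_fderiv_mul_of_hasCompactSupport {E : Type*}
    [NormedAddCommGroup E] [NormedSpace ℝ E] [FiniteDimensional ℝ E] [MeasurableSpace E]
    [BorelSpace E] {μ : Measure E} [μ.IsAddHaarMeasure] {f g : E → ℝ}
    (hf : ContDiff ℝ 1 f) (hfc : HasCompactSupport f) (hg : ContDiff ℝ 1 g) (v : E) :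
    ∫ x, f x * fderiv ℝ g x v ∂μ = -∫ x, fderiv ℝ f x v * g x ∂μ := by
  have hf' : Continuous fun x => fderiv ℝ f x v :=
    (hf.continuous_fderiv one_ne_zero).clm_apply continuous_const
  have hg' : Continuous fun x => fderiv ℝ g x v :=
    (hg.continuous_fderiv one_ne_zero).clm_apply continuous_const
  exact integral_mul_fderiv_eq_neg_fderiv_mul_of_integrable
    ((hf'.mul hg.continuous).integrable_of_hasCompactSupport (hfc.fderiv_apply ℝ v).mul_right)
    ((hf.continuous.mul hg').integrable_of_hasCompactSupport hfc.mul_right)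
    ((hf.continuous.mul hg.continuous).integrable_of_hasCompactSupport hfc.mul_right)
    (fun x _ => hf.differentiable one_ne_zero x) (fun x _ => hg.differentiable one_ne_zero x)

theorem dissipation_eq_of_forced_flow {ε h v l w : ℝ} (hε : ε ≠ 0) (hw : 0 ≤ w)
    (hv : v = h + l * √(2 * w) / ε) (z g : ℝ) :
    -(ε * (z * h + g) * v) = -(ε * z * (h ^ 2 / 2 + v ^ 2 / 2)) + z * l ^ 2 * w / ε
      - ε * g * (h + l * √(2 * w) / ε) := by
  -- Polarization: `-h v = -h² / 2 - v² / 2 + (v - h)² / 2`, where `v - h` is the forcing.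
  have h_forcing : ε * (v - h) ^ 2 / 2 = l ^ 2 * w / ε := by
    rw [hv, add_sub_cancel_left, div_pow, mul_pow, Real.sq_sqrt (by positivity)]
    field_simp
  rw [← hv]
  linear_combination z * h_forcing

section InnerProduct

variable {E : Type*} [NormedAddCommGroup E] [InnerProductSpace ℝ E]

section Gradient

variable [CompleteSpace E] {f : E → ℝ} {u : E → ℝ → ℝ} {V : ℝ → ℝ} {ε : ℝ}

theorem continuous_gradient (hf : ContDiff ℝ 1 f) : Continuous (∇ f) :=
  (InnerProductSpace.toDual ℝ E).symm.continuous.comp (hf.continuous_fderiv one_ne_zero)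

theorem hasCompactSupport_gradient (hf : HasCompactSupport f) : HasCompactSupport (∇ f) :=
  (hf.fderiv ℝ).comp_left (map_zero (InnerProductSpace.toDual ℝ E).symm)

theorem continuous_uncurry_gradient_left (hu : ContDiff ℝ 1 (uncurry u)) :
    Continuous (uncurry fun x t => ∇ (fun y => u y t) x) :=
  (InnerProductSpace.toDual ℝ E).symm.continuous.comp
    (contDiff_uncurry_fderiv_left (m := 0) hu (by simp)).continuous

theorem hasDerivAt_gradient_left (hu : ContDiff ℝ 2 (uncurry u)) (x : E) (t : ℝ) :
    HasDerivAt (fun s => ∇ (fun y => u y s) x) (∇ (fun y => deriv (u y) t) x) t :=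
  (InnerProductSpace.toDual ℝ E).symm.toContinuousLinearEquiv.hasFDerivAt.comp_hasDerivAt t
    (hasDerivAt_fderiv_left hu x t)

/-- The Ginzburg–Landau energy density `ε|∇f|²/2 + V(f)/ε` of a phase field `f` with potential `V`;
for `V = W` it is `σ` times the density of `μ^ε`. -/
def diffuseEnergyDensity (V : ℝ → ℝ) (ε : ℝ) (f : E → ℝ) (x : E) : ℝ :=
  ε * ‖∇ f x‖ ^ 2 / 2 + V (f x) / ε

theorem hasDerivAt_diffuseEnergyDensity (hV : Differentiable ℝ V) (hu : ContDiff ℝ 2 (uncurry u))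
    (x : E) (t : ℝ) :
    HasDerivAt (fun s => diffuseEnergyDensity V ε (fun y => u y s) x)
      (ε * ⟪∇ (fun y => u y t) x, ∇ (fun y => deriv (u y) t) x⟫
        + deriv V (u x t) * deriv (u x) t / ε) t := by
  have hux : HasDerivAt (u x) (deriv (u x) t) t :=
    (hu.comp (contDiff_prodMk_right x)).differentiable two_ne_zero t |>.hasDerivAt
  have h_gradient := ((hasDerivAt_gradient_left hu x t).norm_sq.const_mul ε).div_const 2
  have h_potential := ((hV (u x t)).hasDerivAt.comp t hux).div_const ε
  exact (h_gradient.add h_potential).congr_deriv (by ring)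

theorem continuous_uncurry_diffuseEnergyDensity (hV : Continuous V)
    (hu : ContDiff ℝ 1 (uncurry u)) :
    Continuous (uncurry fun x t => diffuseEnergyDensity V ε (fun y => u y t) x) :=
  ((continuous_const.mul ((continuous_uncurry_gradient_left hu).norm.pow 2)).div_const 2).add
    ((hV.comp hu.continuous).div_const ε)

theorem continuous_uncurry_deriv_diffuseEnergyDensity (hV : ContDiff ℝ 1 V)
    (hu : ContDiff ℝ 2 (uncurry u)) :
    Continuous (uncurry fun x t =>
      deriv (fun s => diffuseEnergyDensity V ε (fun y => u y s) x) t) := by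
  have hu_time : ContDiff ℝ 1 (uncurry fun x t => deriv (u x) t) :=
    contDiff_uncurry_deriv_right hu le_rfl
  simp_rw [(hasDerivAt_diffuseEnergyDensity (hV.differentiable one_ne_zero) hu _ _).deriv]
  exact (continuous_const.mul ((continuous_uncurry_gradient_left (hu.of_le one_le_two)).inner
      (continuous_uncurry_gradient_left hu_time))).add
    (((hV.continuous_deriv_one.comp hu.continuous).mul hu_time.continuous).div_const ε)

end Gradient

variable [FiniteDimensional ℝ E]

theorem inner_gradient_gradient_eq_sum {ι : Type*} [Fintype ι] (b : OrthonormalBasis ι ℝ E)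
    (f g : E → ℝ) (x : E) :
    ⟪∇ f x, ∇ g x⟫ = ∑ i, fderiv ℝ f x (b i) * fderiv ℝ g x (b i) := by
  rw [← b.sum_inner_mul_inner]
  simp [inner_gradient_left, inner_gradient_right]

theorem laplacian_eq_sum_fderiv_fderiv {ι : Type*} [Fintype ι] {f : E → ℝ} (hf : ContDiff ℝ 2 f)
    (b : OrthonormalBasis ι ℝ E) (x : E) :
    Δ f x = ∑ i, fderiv ℝ (fun y => fderiv ℝ f y (b i)) x (b i) := by
  have hDf : DifferentiableAt ℝ (fderiv ℝ f) x :=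
    (hf.fderiv_right (m := 1) le_rfl).differentiable one_ne_zero x
  simp [InnerProductSpace.laplacian_eq_iteratedFDeriv_orthonormalBasis f b,
    iteratedFDeriv_two_apply, fderiv_clm_apply hDf (differentiableAt_const _)]

theorem continuous_laplacian {f : E → ℝ} (hf : ContDiff ℝ 2 f) : Continuous (Δ f) := by
  rw [funext (laplacian_eq_sum_fderiv_fderiv hf (stdOrthonormalBasis ℝ E))]
  fun_prop

/-- The diffuse mean curvature `Δf - V'(f)/ε²`, i.e. `-1/ε` times the `L²`-gradient of the energy
with density `diffuseEnergyDensity V ε f`. -/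
def diffuseCurvature (V : ℝ → ℝ) (ε : ℝ) (f : E → ℝ) (x : E) : ℝ :=
  Δ f x - deriv V (f x) / ε ^ 2

variable [MeasurableSpace E] [BorelSpace E] {μ : Measure E} [μ.IsAddHaarMeasure]

theorem integral_mul_inner_gradient_gradient {η f g : E → ℝ} (hη : ContDiff ℝ 1 η)
    (hηc : HasCompactSupport η) (hf : ContDiff ℝ 2 f) (hg : ContDiff ℝ 1 g) :
    ∫ x, η x * ⟪∇ f x, ∇ g x⟫ ∂μ = -∫ x, (η x * Δ f x + ⟪∇ η x, ∇ f x⟫) * g x ∂μ := by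
  set b := stdOrthonormalBasis ℝ E
  have hf' (i) : ContDiff ℝ 1 fun x => fderiv ℝ f x (b i) :=
    (hf.fderiv_right le_rfl).clm_apply contDiff_const
  have hηf' (i) : ContDiff ℝ 1 fun x => η x * fderiv ℝ f x (b i) := hη.mul (hf' i)
  have h_parts (i) := integral_mul_fderiv_eq_neg_fderiv_mul_of_hasCompactSupport (μ := μ)
    (hηf' i) hηc.mul_right hg (b i)
  have h_divergence (x) : η x * Δ f x + ⟪∇ η x, ∇ f x⟫ =
      ∑ i, fderiv ℝ (fun y => η y * fderiv ℝ f y (b i)) x (b i) := by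
    simp only [laplacian_eq_sum_fderiv_fderiv hf b, inner_gradient_gradient_eq_sum b,
      Finset.mul_sum, ← Finset.sum_add_distrib]
    refine Finset.sum_congr rfl fun i _ => ?_
    rw [fderiv_fun_mul (hη.differentiable one_ne_zero x) ((hf' i).differentiable one_ne_zero x)]
    simp [mul_comm]
  have h_int_left (i) : Integrable (fun x => η x * fderiv ℝ f x (b i) * fderiv ℝ g x (b i)) μ :=
    ((hηf' i).continuous.mul ((hg.continuous_fderiv one_ne_zero).clm_apply
      continuous_const)).integrable_of_hasCompactSupport hηc.mul_right.mul_right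
  have h_int_right (i) :
      Integrable (fun x => fderiv ℝ (fun y => η y * fderiv ℝ f y (b i)) x (b i) * g x) μ :=
    ((((hηf' i).continuous_fderiv one_ne_zero).clm_apply continuous_const).mul
      hg.continuous).integrable_of_hasCompactSupport (hηc.mul_right.fderiv_apply ℝ _).mul_right
  calc ∫ x, η x * ⟪∇ f x, ∇ g x⟫ ∂μ
    _ = ∑ i, ∫ x, η x * fderiv ℝ f x (b i) * fderiv ℝ g x (b i) ∂μ := by
      simp_rw [inner_gradient_gradient_eq_sum b, Finset.mul_sum, ← mul_assoc]
      exact integral_finsetSum _ fun i _ => h_int_left i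
    _ = -∑ i, ∫ x, fderiv ℝ (fun y => η y * fderiv ℝ f y (b i)) x (b i) * g x ∂μ := by
      simp_rw [h_parts, Finset.sum_neg_distrib]
    _ = -∫ x, (η x * Δ f x + ⟪∇ η x, ∇ f x⟫) * g x ∂μ := by
      simp_rw [h_divergence, Finset.sum_mul]
      rw [integral_finsetSum _ fun i _ => h_int_right i]

theorem integrable_mul_laplacian_add_inner_gradient_mul {η f g : E → ℝ} (hη : ContDiff ℝ 1 η)
    (hηc : HasCompactSupport η) (hf : ContDiff ℝ 2 f) (hg : Continuous g) :
    Integrable (fun x => (η x * Δ f x + ⟪∇ η x, ∇ f x⟫) * g x) μ := by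
  have h_cont : Continuous fun x => η x * Δ f x + ⟪∇ η x, ∇ f x⟫ :=
    (hη.continuous.mul (continuous_laplacian hf)).add
      ((continuous_gradient hη).inner (continuous_gradient (hf.of_le one_le_two)))
  have h_supp : HasCompactSupport fun x => ⟪∇ η x, ∇ f x⟫ :=
    (hasCompactSupport_gradient hηc).mono' fun x hx => subset_tsupport _ fun h => hx (by simp [h])
  exact (h_cont.mul hg).integrable_of_hasCompactSupport (hηc.mul_right.add h_supp).mul_right

variable {u : E → ℝ → ℝ} {V : ℝ → ℝ} {ε : ℝ}

theorem integral_mul_deriv_diffuseEnergyDensity (hV : ContDiff ℝ 1 V) (hε : ε ≠ 0)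
    (hu : ContDiff ℝ 2 (uncurry u)) {η : E → ℝ} (hη : ContDiff ℝ 1 η) (hηc : HasCompactSupport η)
    (t : ℝ) :
    ∫ x, η x * deriv (fun s => diffuseEnergyDensity V ε (fun y => u y s) x) t ∂μ =
      ∫ x, -(ε * (η x * diffuseCurvature V ε (fun y => u y t) x
        + ⟪∇ η x, ∇ (fun y => u y t) x⟫) * deriv (u x) t) ∂μ := by
  have hut : ContDiff ℝ 2 fun x => u x t := hu.comp (contDiff_prodMk_left t)
  have hv : ContDiff ℝ 1 fun x => deriv (u x) t :=
    (contDiff_uncurry_deriv_right hu le_rfl).comp (contDiff_prodMk_left t)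
  have h_int_gradient : Integrable
      (fun x => η x * ⟪∇ (fun y => u y t) x, ∇ (fun y => deriv (u y) t) x⟫) μ :=
    (hη.continuous.mul ((continuous_gradient (hut.of_le one_le_two)).inner
      (continuous_gradient hv))).integrable_of_hasCompactSupport hηc.mul_right
  have h_int_potential : Integrable
      (fun x => η x * (deriv V (u x t) * deriv (u x) t / ε)) μ :=
    (hη.continuous.mul (((hV.continuous_deriv_one.comp hut.continuous).mul
      hv.continuous).div_const ε)).integrable_of_hasCompactSupport hηc.mul_right
  have h_int_green := integrable_mul_laplacian_add_inner_gradient_mul (μ := μ)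
    hη hηc hut hv.continuous
  calc ∫ x, η x * deriv (fun s => diffuseEnergyDensity V ε (fun y => u y s) x) t ∂μ
    _ = ∫ x, (ε * (η x * ⟪∇ (fun y => u y t) x, ∇ (fun y => deriv (u y) t) x⟫)
          + η x * (deriv V (u x t) * deriv (u x) t / ε)) ∂μ := by
      simp_rw [(hasDerivAt_diffuseEnergyDensity (hV.differentiable one_ne_zero) hu _ _).deriv,
        mul_add, mul_left_comm]
    _ = -ε * (∫ x, (η x * Δ (fun y => u y t) x + ⟪∇ η x, ∇ (fun y => u y t) x⟫)
            * deriv (u x) t ∂μ)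
          + ∫ x, η x * (deriv V (u x t) * deriv (u x) t / ε) ∂μ := by
      rw [integral_add (h_int_gradient.const_mul ε) h_int_potential, integral_const_mul,
        integral_mul_inner_gradient_gradient hη hηc hut hv, mul_neg, neg_mul]
    _ = ∫ x, -(ε * (η x * diffuseCurvature V ε (fun y => u y t) x
          + ⟪∇ η x, ∇ (fun y => u y t) x⟫) * deriv (u x) t) ∂μ := by
      rw [← integral_const_mul, ← integral_add (h_int_green.const_mul (-ε)) h_int_potential]
      congr with x
      rw [diffuseCurvature]
      field_simp
      ring

theorem integral_mul_diffuseEnergyDensity_sub (hV : ContDiff ℝ 1 V) (hε : ε ≠ 0)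
    (hu : ContDiff ℝ 2 (uncurry u)) {ζ : E → ℝ → ℝ} (hζ : ContDiff ℝ 1 (uncurry ζ)) {K : Set E}
    (hK : IsCompact K) (hζK : ∀ t, support (fun x => ζ x t) ⊆ K) (t₁ t₂ : ℝ) :
    (∫ x, ζ x t₂ * diffuseEnergyDensity V ε (fun y => u y t₂) x ∂μ)
        - ∫ x, ζ x t₁ * diffuseEnergyDensity V ε (fun y => u y t₁) x ∂μ =
      (∫ t in t₁..t₂, ∫ x, -(ε * (ζ x t * diffuseCurvature V ε (fun y => u y t) x
          + ⟪∇ (fun y => ζ y t) x, ∇ (fun y => u y t) x⟫) * deriv (u x) t) ∂μ)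
        + ∫ t in t₁..t₂, ∫ x, deriv (ζ x) t * diffuseEnergyDensity V ε (fun y => u y t) x ∂μ := by
  have hζ_slice (t) : ContDiff ℝ 1 fun x => ζ x t := hζ.comp (contDiff_prodMk_left t)
  have hζ_deriv (x t) : HasDerivAt (ζ x) (deriv (ζ x) t) t :=
    (hζ.comp (contDiff_prodMk_right x)).differentiable one_ne_zero t |>.hasDerivAt
  have h_energy_deriv (x t) := (hasDerivAt_diffuseEnergyDensity (ε := ε)
    (hV.differentiable one_ne_zero) hu x t).differentiableAt.hasDerivAt
  have h_first_variation (t) := integral_mul_deriv_diffuseEnergyDensity (μ := μ) hV hε hu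
    (hζ_slice t) (.of_support_subset_isCompact hK (hζK t)) t
  rw [integral_mul_sub_integral_mul_eq_intervalIntegral_integral hζ.continuous
    (contDiff_uncurry_deriv_right (m := 0) hζ (by simp)).continuous
    (continuous_uncurry_diffuseEnergyDensity hV.continuous (hu.of_le one_le_two))
    (continuous_uncurry_deriv_diffuseEnergyDensity hV hu) hζ_deriv h_energy_deriv hK hζK]
  simp_rw [h_first_variation]

theorem brakke_identity_of_forced_allenCahn (hV : ContDiff ℝ 1 V) (hV_nonneg : ∀ s, 0 ≤ V s)
    (hε : ε ≠ 0) (hu : ContDiff ℝ 2 (uncurry u)) {t₁ t₂ : ℝ} (ht : t₁ ≤ t₂) {l : ℝ → ℝ}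
    (hpde : ∀ x, ∀ t ∈ Set.Ioo t₁ t₂,
      deriv (u x) t = diffuseCurvature V ε (fun y => u y t) x + l t * √(2 * V (u x t)) / ε)
    {ζ : E → ℝ → ℝ} (hζ : ContDiff ℝ 1 (uncurry ζ)) {K : Set E}
    (hK : IsCompact K) (hζK : ∀ t, support (fun x => ζ x t) ⊆ K) :
    (∫ x, ζ x t₂ * diffuseEnergyDensity V ε (fun y => u y t₂) x ∂μ)
        - ∫ x, ζ x t₁ * diffuseEnergyDensity V ε (fun y => u y t₁) x ∂μ =
      (∫ t in t₁..t₂, ∫ x,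
        (-(ε * ζ x t * (diffuseCurvature V ε (fun y => u y t) x ^ 2 / 2 + deriv (u x) t ^ 2 / 2))
          + ζ x t * l t ^ 2 * V (u x t) / ε
          - ε * ⟪∇ (fun y => ζ y t) x, ∇ (fun y => u y t) x⟫
            * (diffuseCurvature V ε (fun y => u y t) x + l t * √(2 * V (u x t)) / ε)) ∂μ)
        + ∫ t in t₁..t₂, ∫ x, deriv (ζ x) t * diffuseEnergyDensity V ε (fun y => u y t) x ∂μ := by
  rw [integral_mul_diffuseEnergyDensity_sub hV hε hu hζ hK hζK]
  congr 1
  refine intervalIntegral.integral_congr_Ioo_of_le ht fun t ht' => ?_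
  refine integral_congr_ae (.of_forall fun x => ?_)
  exact dissipation_eq_of_forced_flow hε (hV_nonneg _) (hpde x t ht') _ _

end InnerProduct

section DoubleWell

theorem hasDerivAt_W (s : ℝ) : HasDerivAt W (Wp s) s := by
  refine ((((hasDerivAt_pow 2 s).const_sub 1).pow 2).div_const 2).congr_deriv ?_
  simp only [Wp]
  ring

theorem contDiff_W {n : WithTop ℕ∞} : ContDiff ℝ n W := by
  unfold W
  fun_prop

theorem W_nonneg (s : ℝ) : 0 ≤ W s := by
  unfold W
  positivity

theorem sigma0_pos : 0 < sigma0 := by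
  refine intervalIntegral.intervalIntegral_pos_of_pos_on ?_ (fun s hs => ?_) (by norm_num)
  · exact (continuous_const.mul (contDiff_W (n := 0)).continuous).sqrt.intervalIntegrable _ _
  · have : 0 < 1 - s ^ 2 := by nlinarith [hs.1, hs.2]
    unfold W
    positivity

variable {d : ℕ}

theorem lap_eq_laplacian {f : Euc d → ℝ} (hf : ContDiff ℝ 2 f) (x : Euc d) : lap f x = Δ f x := by
  simp [lap, laplacian_eq_sum_fderiv_fderiv hf (EuclideanSpace.basisFun (Fin d) ℝ)]

theorem heps_eq_diffuseCurvature {ε t : ℝ} {φt : Euc d → ℝ → ℝ}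
    (hφt : ContDiff ℝ 2 fun y => φt y t) (x : Euc d) :
    heps d ε φt x t = diffuseCurvature W ε (fun y => φt y t) x := by
  rw [heps, diffuseCurvature, lap_eq_laplacian hφt, (hasDerivAt_W _).deriv]

theorem sigma0_mul_integral_mul_muDens (ε t : ℝ) (φt : Euc d → ℝ → ℝ) (η : Euc d → ℝ) :
    sigma0 * ∫ x, η x * muDens d ε φt x t =
      ∫ x, η x * diffuseEnergyDensity W ε (fun y => φt y t) x := by
  rw [← integral_const_mul]
  congr with x
  rw [muDens, diffuseEnergyDensity]
  linear_combination (η x * (ε * ‖∇ (fun y => φt y t) x‖ ^ 2 / 2 + W (φt x t) / ε)) *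
    mul_one_div_cancel sigma0_pos.ne'

end DoubleWell

theorem stmt3_general (d : ℕ) (ε t₁ t₂ : ℝ) (hε : ε ≠ 0) (ht : t₁ ≤ t₂)
    (φt : Euc d → ℝ → ℝ) (hφt : ContDiff ℝ 2 (uncurry φt)) (lam : ℝ → ℝ)
    (hPDE : ∀ (x : Euc d), ∀ t ∈ Set.Ioo t₁ t₂,
      ε * deriv (φt x) t =
        ε * lap (fun y => φt y t) x - Wp (φt x t) / ε + lam t * √(2 * W (φt x t)))
    (ζ : Euc d → ℝ → ℝ) (hζ : ContDiff ℝ 1 (uncurry ζ)) (K : Set (Euc d)) (hK : IsCompact K)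
    (hζsupp : ∀ t : ℝ, support (fun x => ζ x t) ⊆ K) :
    sigma0 * ((∫ x, ζ x t₂ * muDens d ε φt x t₂) - ∫ x, ζ x t₁ * muDens d ε φt x t₁) =
      (∫ t in t₁..t₂, ∫ x,
        (-(ε * ζ x t * ((heps d ε φt x t) ^ 2 / 2 + (deriv (φt x) t) ^ 2 / 2))
          + ζ x t * (lam t) ^ 2 * W (φt x t) / ε
          - ε * ⟪∇ (fun y => ζ y t) x, ∇ (fun y => φt y t) x⟫
              * (heps d ε φt x t + lam t * √(2 * W (φt x t)) / ε)))
        + sigma0 * ∫ t in t₁..t₂, ∫ x, deriv (ζ x) t * muDens d ε φt x t := by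
  have hφt_slice (t) : ContDiff ℝ 2 fun y => φt y t := hφt.comp (contDiff_prodMk_left t)
  have h_heps (x t) : heps d ε φt x t = diffuseCurvature W ε (fun y => φt y t) x :=
    heps_eq_diffuseCurvature (hφt_slice t) x
  have h_velocity (x) (t) (ht' : t ∈ Set.Ioo t₁ t₂) :
      deriv (φt x) t = heps d ε φt x t + lam t * √(2 * W (φt x t)) / ε := by
    rw [← mul_right_inj' hε, hPDE x t ht', heps]
    field_simp
  simp_rw [h_heps] at h_velocity ⊢
  simp_rw [mul_sub, ← intervalIntegral.integral_const_mul, sigma0_mul_integral_mul_muDens]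
  exact brakke_identity_of_forced_allenCahn contDiff_W W_nonneg hε hφt ht h_velocity hζ hK hζsupp

/-- integrated Brakke-type identity at the `ε`-level. -/
theorem stmt3 (d : ℕ) (hd : 2 ≤ d) (T ε α : ℝ) (hT : 0 < T) (hε : 0 < ε)
    (hα : α ∈ Set.Ioo (0:ℝ) 1)
    (φt : Euc d → ℝ → ℝ)
    (hφt : ContDiff ℝ (⊤ : ℕ∞) (Function.uncurry φt))
    (hper : ∀ (x : Euc d) (z : Fin d → ℤ) (t : ℝ),
      φt (x + (WithLp.equiv 2 (Fin d → ℝ)).symm fun i => (z i : ℝ)) t = φt x t)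
    (lam : ℝ → ℝ)
    (hlam : ∀ t, lam t = ε ^ (-α) *
      ((∫ x in Qcell d, kfun (φt x 0)) - (∫ x in Qcell d, kfun (φt x t))))
    (hPDE : ∀ (x : Euc d), ∀ t ∈ Set.Ioo (0:ℝ) T,
      ε * deriv (φt x) t =
        ε * lap (fun y => φt y t) x - Wp (φt x t) / ε + lam t * Real.sqrt (2 * W (φt x t)))
    (ζ : Euc d → ℝ → ℝ)
    (hζ : ContDiff ℝ 1 (Function.uncurry ζ))
    (K : Set (Euc d)) (hK : IsCompact K)
    (hζsupp : ∀ t : ℝ, Function.support (fun x => ζ x t) ⊆ K) :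
    ∀ t₁ t₂ : ℝ, 0 ≤ t₁ → t₁ < t₂ → t₂ ≤ T →
      sigma0 * ((∫ x, ζ x t₂ * muDens d ε φt x t₂) - ∫ x, ζ x t₁ * muDens d ε φt x t₁) =
        (∫ t in t₁..t₂, ∫ x,
          (-(ε * ζ x t * ((heps d ε φt x t) ^ 2 / 2 + (deriv (φt x) t) ^ 2 / 2))
            + ζ x t * (lam t) ^ 2 * W (φt x t) / ε
            - ε * ⟪gradient (fun y => ζ y t) x, gradient (fun y => φt y t) x⟫
                * (heps d ε φt x t + lam t * Real.sqrt (2 * W (φt x t)) / ε)))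
          + sigma0 * ∫ t in t₁..t₂, ∫ x, deriv (ζ x) t * muDens d ε φt x t := by
  intro t₁ t₂ h₁ h₁₂ h₂
  exact stmt3_general d ε t₁ t₂ hε.ne' h₁₂.le φt (hφt.of_le (by norm_cast)) lam
    (fun x t ht => hPDE x t ⟨h₁.trans_lt ht.1, ht.2.trans_le h₂⟩) ζ hζ K hK hζsupp
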